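/- In a mixed graph M, let p = ⟨w_0, w_1, …, w_{m+1}⟩ (m ≥ 0) be a path such that no internal vertex of p is a collider on p. Then every internal vertex w_i (1 ≤ i ≤ m) is an ancestor of w_0 or an ancestor of w_{m+1} in M. -/

import Mathlib

/-- Marks at edge ends in a partial mixed graph. -/
inductive Mark : Type
  | tail
  | arrow
  | circle
deriving DecidableEq

/-- A partial mixed graph (PMG): a symmetric irreflexive adjacency relation together
with, for each ordered pair `(a, b)` of adjacent vertices, a mark `mark a b` at `b` on
the edge `a–b`, such that no edge has tails at both endpoints. -/
structure PMG (V : Type) where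
  adj : V → V → Prop
  symm : ∀ a b, adj a b → adj b a
  irrefl : ∀ a, ¬ adj a a
  mark : V → V → Mark
  noDoubleTail : ∀ a b, adj a b → ¬ (mark a b = Mark.tail ∧ mark b a = Mark.tail)

namespace PMG

variable {V : Type}

/-- `a → b`: adjacent, tail at `a`, arrowhead at `b`. -/
def dir (G : PMG V) (a b : V) : Prop :=
  G.adj a b ∧ G.mark b a = Mark.tail ∧ G.mark a b = Mark.arrow

/-- `a ↔ b`: adjacent, arrowheads at both endpoints. -/
def bidir (G : PMG V) (a b : V) : Prop :=
  G.adj a b ∧ G.mark b a = Mark.arrow ∧ G.mark a b = Mark.arrow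

/-- `a` is an ancestor of `b`: `a = b` or there is a directed path from `a` to `b`. -/
def Anc (G : PMG V) (a b : V) : Prop :=
  Relation.ReflTransGen G.dir a b

/-- `a` is an ancestor of some vertex of the set `S`. -/
def AncSet (G : PMG V) (a : V) (S : Set V) : Prop :=
  ∃ v ∈ S, G.Anc a v

/-- A mixed graph: a PMG with no circle marks. -/
def IsMixed (G : PMG V) : Prop :=
  ∀ a b, G.adj a b → G.mark a b ≠ Mark.circle

/-- Ancestral: no directed cycles and no almost directed cycles. -/
def Ancestral (G : PMG V) : Prop :=
  ∀ a b, G.Anc a b → a ≠ b → ¬ G.dir b a ∧ ¬ G.bidir a b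

/-- Unshielded collider `(a, b, c)`: `a, c` both adjacent to `b`, `a` and `c`
distinct and nonadjacent, arrowheads at `b` on both edges. -/
def UnshieldedCollider (G : PMG V) (a b c : V) : Prop :=
  a ≠ c ∧ G.adj a b ∧ G.adj c b ∧ ¬ G.adj a c ∧
    G.mark a b = Mark.arrow ∧ G.mark c b = Mark.arrow

/-- `M` is a completion of the PMG `H`: same vertices and adjacencies, all non-circle
marks of `H` occur identically in `M`, `M` is an ancestral mixed graph, and every
unshielded collider of `M` is already an unshielded collider of `H`. -/
def Completion (H M : PMG V) : Prop :=
  (∀ a b, M.adj a b ↔ H.adj a b) ∧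
  (∀ a b, H.adj a b → H.mark a b ≠ Mark.circle → M.mark a b = H.mark a b) ∧
  M.IsMixed ∧ M.Ancestral ∧
  (∀ a b c, M.UnshieldedCollider a b c → H.UnshieldedCollider a b c)

/-- An edge usable in a possible directed path from `a` to `b`:
adjacent, no arrowhead at `a`, no tail at `b`. -/
def possEdge (G : PMG V) (a b : V) : Prop :=
  G.adj a b ∧ G.mark b a ≠ Mark.arrow ∧ G.mark a b ≠ Mark.tail

/-- A circle edge: adjacent with circle marks at both endpoints. -/
def circleEdge (G : PMG V) (a b : V) : Prop :=
  G.adj a b ∧ G.mark a b = Mark.circle ∧ G.mark b a = Mark.circle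

/-- `p 0, …, p n` is a path: distinct vertices, consecutive ones adjacent. -/
def IsPathOn (G : PMG V) (p : ℕ → V) (n : ℕ) : Prop :=
  (∀ i ≤ n, ∀ j ≤ n, p i = p j → i = j) ∧ ∀ i < n, G.adj (p i) (p (i+1))

/-- `p 0, …, p n` is a possible directed path. -/
def IsPossDirPathOn (G : PMG V) (p : ℕ → V) (n : ℕ) : Prop :=
  (∀ i ≤ n, ∀ j ≤ n, p i = p j → i = j) ∧ ∀ i < n, G.possEdge (p i) (p (i+1))

/-- `p 0, …, p n` is a circle path. -/
def IsCirclePathOn (G : PMG V) (p : ℕ → V) (n : ℕ) : Prop :=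
  (∀ i ≤ n, ∀ j ≤ n, p i = p j → i = j) ∧ ∀ i < n, G.circleEdge (p i) (p (i+1))

/-- The path `p 0, …, p n` is uncovered: any two nonconsecutive neighbours of an
internal vertex are nonadjacent. -/
def UncoveredOn (G : PMG V) (p : ℕ → V) (n : ℕ) : Prop :=
  ∀ i, i + 2 ≤ n → ¬ G.adj (p i) (p (i+2))

/-- `F_x` relative to `V'`: the vertices of `V'` adjacent to `x` whose edge carries
a circle or an arrowhead at `x`. -/
def Fset (G : PMG V) (V' : Set V) (x : V) : Set V :=
  {v | v ∈ V' ∧ G.adj v x ∧ (G.mark v x = Mark.circle ∨ G.mark v x = Mark.arrow)}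

/-- `p 0, …, p n` is an unbridged path relative to `V'` in `G`: an uncovered circle
path with at least one edge, lying in `G[−V']`, with
`F_{p 0} \ F_{p 1} ≠ ∅` and `F_{p n} \ F_{p (n-1)} ≠ ∅`. -/
def UnbridgedOn (G : PMG V) (V' : Set V) (p : ℕ → V) (n : ℕ) : Prop :=
  1 ≤ n ∧ G.IsCirclePathOn p n ∧ G.UncoveredOn p n ∧
  (∀ i ≤ n, p i ∉ V') ∧
  (G.Fset V' (p 0) \ G.Fset V' (p 1)).Nonempty ∧
  (G.Fset V' (p n) \ G.Fset V' (p (n-1))).Nonempty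

/-- The set `S_A`: `A` together with all vertices adjacent to `A` whose edge has an
arrowhead at `A`. -/
def SA (G : PMG V) (A : V) : Set V :=
  {A} ∪ {v | G.adj v A ∧ G.mark v A = Mark.arrow}

end PMG

/-!
In a mixed graph an edge with no arrowhead at `a` points out of `a`. Hence an internal non-collider
has an edge of the path pointing out of it, and the path must keep following that direction: the
next vertex is entered by an arrowhead and is not a collider, so the next edge points out of it,
and so on until an endpoint is reached.
-/

namespace PMG

variable {V : Type} {G : PMG V} {a b c : V} {p : ℕ → V} {n i j : ℕ}

/-- The marks at `b` make it a collider between `a` and `c`. Adjacency is left to the context, and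
`a` and `c` may be adjacent or equal. -/
def IsCollider (G : PMG V) (a b c : V) : Prop :=
  G.mark a b = Mark.arrow ∧ G.mark c b = Mark.arrow

/-- `p 0, …, p n` is a walk, possibly with repeated vertices, that has no collider among the
internal positions `1, …, n - 1`. -/
structure IsNoncolliderWalkOn (G : PMG V) (p : ℕ → V) (n : ℕ) : Prop where
  adj : ∀ i < n, G.adj (p i) (p (i + 1))
  not_isCollider : ∀ i, i + 1 < n → ¬ G.IsCollider (p i) (p (i + 1)) (p (i + 2))

theorem IsCollider.symm (h : G.IsCollider a b c) : G.IsCollider c b a :=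
  And.symm h

theorem IsMixed.mark_eq_tail_or_arrow (hG : G.IsMixed) (hab : G.adj a b) :
    G.mark a b = Mark.tail ∨ G.mark a b = Mark.arrow := by
  cases h : G.mark a b with
  | tail => exact .inl rfl
  | arrow => exact .inr rfl
  | circle => exact absurd h (hG a b hab)

theorem IsMixed.dir_of_mark_ne_arrow (hG : G.IsMixed) (hab : G.adj a b)
    (ha : G.mark b a ≠ Mark.arrow) : G.dir a b := by
  have tail_at_a : G.mark b a = Mark.tail :=
    (hG.mark_eq_tail_or_arrow (G.symm a b hab)).resolve_right ha
  have arrow_at_b : G.mark a b = Mark.arrow :=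
    (hG.mark_eq_tail_or_arrow hab).resolve_left fun hb => G.noDoubleTail a b hab ⟨hb, tail_at_a⟩
  exact ⟨hab, tail_at_a, arrow_at_b⟩

theorem IsMixed.dir_of_dir_of_not_isCollider (hG : G.IsMixed) (hab : G.dir a b)
    (hbc : G.adj b c) (h : ¬ G.IsCollider a b c) : G.dir b c :=
  hG.dir_of_mark_ne_arrow hbc fun hcb => h ⟨hab.2.2, hcb⟩

theorem IsMixed.dir_or_dir_of_not_isCollider (hG : G.IsMixed) (hab : G.adj a b)
    (hbc : G.adj b c) (h : ¬ G.IsCollider a b c) : G.dir b a ∨ G.dir b c :=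
  (not_and_or.mp h).imp (hG.dir_of_mark_ne_arrow (G.symm a b hab)) (hG.dir_of_mark_ne_arrow hbc)

namespace IsNoncolliderWalkOn

theorem dir_succ_of_dir_succ_of_le (hp : G.IsNoncolliderWalkOn p n) (hG : G.IsMixed)
    (hi : G.dir (p i) (p (i + 1))) (hij : i ≤ j) (hj : j < n) : G.dir (p j) (p (j + 1)) := by
  induction j, hij using Nat.le_induction with
  | base => exact hi
  | succ j _ ih =>
    exact hG.dir_of_dir_of_not_isCollider (ih (by omega)) (hp.adj _ hj) (hp.not_isCollider j hj)

theorem succ_dir_of_succ_dir_of_le (hp : G.IsNoncolliderWalkOn p n) (hG : G.IsMixed)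
    (hj : G.dir (p (j + 1)) (p j)) (hij : i ≤ j) (hjn : j < n) : G.dir (p (i + 1)) (p i) := by
  induction hij using Nat.decreasingInduction with
  | self => exact hj
  | of_succ i hij ih =>
    exact hG.dir_of_dir_of_not_isCollider ih (G.symm _ _ (hp.adj i (by omega)))
      fun h => hp.not_isCollider i (by omega) h.symm

theorem anc_last_of_dir_succ (hp : G.IsNoncolliderWalkOn p n) (hG : G.IsMixed)
    (hi : G.dir (p i) (p (i + 1))) (hin : i < n) : G.Anc (p i) (p n) := by
  have index_chain : Relation.ReflTransGen (fun j k => G.dir (p j) (p k)) i n :=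
    reflTransGen_of_succ_of_le _
      (fun _ hj => hp.dir_succ_of_dir_succ_of_le hG hi hj.1 hj.2) hin.le
  exact index_chain.lift p fun _ _ => id

theorem anc_first_of_succ_dir (hp : G.IsNoncolliderWalkOn p n) (hG : G.IsMixed)
    (hi : G.dir (p (i + 1)) (p i)) (hin : i < n) : G.Anc (p (i + 1)) (p 0) := by
  have index_chain : Relation.ReflTransGen (fun j k => G.dir (p j) (p k)) (i + 1) 0 :=
    reflTransGen_of_succ_of_ge _
      (fun _ hj => hp.succ_dir_of_succ_dir_of_le hG hi (Nat.le_of_lt_succ hj.2) hin)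
      (Nat.zero_le _)
  exact index_chain.lift p fun _ _ => id

end IsNoncolliderWalkOn

end PMG

theorem noncollider_path_ancestor_general {V : Type} {M : PMG V} (hM : M.IsMixed)
    {p : ℕ → V} {n : ℕ} (hp : M.IsNoncolliderWalkOn p n) {i : ℕ} (hi : i ≤ n) :
    M.Anc (p i) (p 0) ∨ M.Anc (p i) (p n) := by
  rcases hi.eq_or_lt with rfl | hin
  · exact .inr .refl
  cases i with
  | zero => exact .inl .refl
  | succ k =>
    have hkn : k < n := Nat.lt_of_succ_lt hin
    exact (hM.dir_or_dir_of_not_isCollider (hp.adj k hkn) (hp.adj (k + 1) hin)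
      (hp.not_isCollider k hin)).imp (hp.anc_first_of_succ_dir hM · hkn)
        (hp.anc_last_of_dir_succ hM · hin)

/-- In a mixed graph `M`, on a path `⟨w_0, …, w_{m+1}⟩` none of whose internal
vertices is a collider, every internal vertex is an ancestor of `w_0` or of
`w_{m+1}`. -/
theorem noncollider_path_ancestor {V : Type} (M : PMG V) (hM : M.IsMixed)
    (p : ℕ → V) (m : ℕ) (hpath : M.IsPathOn p (m+1))
    (hnc : ∀ i, 1 ≤ i → i ≤ m →
      ¬ (M.mark (p (i-1)) (p i) = Mark.arrow ∧
         M.mark (p (i+1)) (p i) = Mark.arrow)) :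
    ∀ i, 1 ≤ i → i ≤ m → M.Anc (p i) (p 0) ∨ M.Anc (p i) (p (m+1)) := by
  intro i _ hi
  exact noncollider_path_ancestor_general hM
    ⟨hpath.2, fun j hj => hnc (j + 1) (by omega) (by omega)⟩ (by omega)
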